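/- Let V be a commutative ring and m ⊆ V an ideal satisfying m·m = m such that m̃ = m ⊗_V m is a flat V-module. Let f : R → S be a homomorphism of commutative V-algebras such that m·ker(f) = 0 and there exists a finitely generated R-submodule Q ⊆ S with m·S ⊆ Q (f is a finite monomorphism of almost algebras). Let M be an R-module such that m·Tor_1^S(S ⊗_R M, N) = 0 for every S-module N (S ⊗_R M is almost flat over S). Then m·Tor_1^R(M, N) = 0 for every R-module N (M is almost flat over R). -/

import Mathlib

universe u v

open CategoryTheory TensorProduct

/-- Almost flat module: `m·Tor_1^R(M, N) = 0` for all `N`. -/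
def IsAlmostFlat (V : Type v) [CommRing V] (m : Ideal V)
    (R : Type u) [CommRing R] [Algebra V R]
    (M : Type u) [AddCommGroup M] [Module R M] : Prop :=
  ∀ N : ModuleCat.{u} R, ∀ a ∈ m,
    ∀ x : ((Tor (ModuleCat.{u} R) 1).obj (ModuleCat.of R M)).obj N,
      algebraMap V R a • x = 0

section AFcore

variable {ι : Type*}

/-- Coordinatewise base change of finitely supported functions. -/
noncomputable def fbc {R S : Type*} [CommRing R] [CommRing S] (ι : Type*) (f : R →+* S) :
    (ι →₀ R) →+ (ι →₀ S) :=
  Finsupp.mapRange.addMonoidHom f.toAddMonoidHom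

@[simp] lemma fbc_apply {R S : Type*} [CommRing R] [CommRing S] (f : R →+* S) (x : ι →₀ R) (i : ι) :
    fbc ι f x i = f (x i) := rfl

lemma fbc_smul {R S : Type*} [CommRing R] [CommRing S] (f : R →+* S) (r : R) (x : ι →₀ R) :
    fbc ι f (r • x) = f r • fbc ι f x := by
  ext i; simp

/-- The extension of a submodule of a free module along a ring homomorphism. -/
noncomputable def fext {R S : Type*} [CommRing R] [CommRing S] (f : R →+* S) (K : Submodule R (ι →₀ R)) :
    Submodule S (ι →₀ S) :=
  Submodule.span S (Set.image (fbc ι f) (K : Set (ι →₀ R)))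

lemma fbc_mem_fext {R S : Type*} [CommRing R] [CommRing S] (f : R →+* S)
    (K : Submodule R (ι →₀ R)) {x : ι →₀ R} (hx : x ∈ K) : fbc ι f x ∈ fext f K :=
  Submodule.subset_span ⟨x, hx, rfl⟩

/-- Approximate equational flatness of `(ι →₀ R) / K` modulo `I`, up to the scalar `a`. -/
def AF {R : Type*} [CommRing R] (K : Submodule R (ι →₀ R)) (I : Ideal R) (a : R) : Prop :=
  ∀ X : Finset (ι →₀ R), (∀ x ∈ X, x ∈ K) →
    ∃ φ : (ι →₀ R) →ₗ[R] (ι →₀ R), (∀ y, φ y ∈ K) ∧ ∀ x ∈ X, ∀ i, (φ x - a • x) i ∈ I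

/-- The scalar extension of an endomorphism of a free module. -/
noncomputable def fendo {R S : Type*} [CommRing R] [CommRing S] (f : R →+* S)
    (φ : (ι →₀ R) →ₗ[R] (ι →₀ R)) : (ι →₀ S) →ₗ[S] (ι →₀ S) :=
  Finsupp.linearCombination S (fun i => fbc ι f (φ (Finsupp.single i 1)))

lemma fendo_fbc {R S : Type*} [CommRing R] [CommRing S] (f : R →+* S)
    (φ : (ι →₀ R) →ₗ[R] (ι →₀ R)) (x : ι →₀ R) : fendo f φ (fbc ι f x) = fbc ι f (φ x) := by
  induction x using Finsupp.induction_linear with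
  | zero => simp
  | add x y hx hy => simp [hx, hy]
  | single i r =>
    have h1 : fbc ι f (Finsupp.single i r) = Finsupp.single i (f r) := by
      simp [fbc]
    have h2 : Finsupp.single i r = r • Finsupp.single i (1 : R) := by simp
    rw [h1, h2, map_smul, fbc_smul]
    simp [fendo]

lemma fext_fin {R S : Type*} [CommRing R] [CommRing S] (f : R →+* S)
    (K : Submodule R (ι →₀ R)) (X : Finset (ι →₀ S)) (hX : ∀ x ∈ X, x ∈ fext f K) :
    ∃ Y : Finset (ι →₀ R), (∀ y ∈ Y, y ∈ K) ∧
      ∀ x ∈ X, x ∈ Submodule.span S (Set.image (fbc ι f) (Y : Set (ι →₀ R))) := by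
  classical
  induction X using Finset.induction_on with
  | empty => exact ⟨∅, by simp, by simp⟩
  | insert x X hx ih =>
    obtain ⟨Y, hY, hXY⟩ := ih (fun z hz => hX z (Finset.mem_insert_of_mem hz))
    obtain ⟨T, hT, hxT⟩ := Submodule.mem_span_finite_of_mem_span (hX x (Finset.mem_insert_self _ _))
    obtain ⟨Z, hZ, rfl⟩ := Finset.subset_set_image_iff.mp hT
    refine ⟨Y ∪ Z, ?_, ?_⟩
    · intro y hy
      rcases Finset.mem_union.mp hy with h | h
      · exact hY y h
      · exact hZ h
    · intro z hz
      rcases Finset.mem_insert.mp hz with rfl | h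
      · refine Submodule.span_mono ?_ hxT
        rw [Finset.coe_image]
        exact Set.image_mono (by simp)
      · exact Submodule.span_mono (Set.image_mono (by simp)) (hXY z h)

lemma AF.asc {R S : Type*} [CommRing R] [CommRing S] (f : R →+* S)
    {K : Submodule R (ι →₀ R)} {a : R} (h : AF K ⊥ a) : AF (fext f K) ⊥ (f a) := by
  intro X hX
  obtain ⟨Y, hY, hXY⟩ := fext_fin f K X hX
  obtain ⟨φ, hφ, hφY⟩ := h Y hY
  refine ⟨fendo f φ, ?_, ?_⟩
  · intro y
    rw [fendo, Finsupp.linearCombination_apply]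
    exact Submodule.sum_mem _ (fun i _ => Submodule.smul_mem _ _ (fbc_mem_fext f K (hφ _)))
  · intro x hx i
    have : fendo f φ x = f a • x := by
      refine Submodule.span_induction (p := fun x _ => fendo f φ x = f a • x) ?_ ?_ ?_ ?_ (hXY x hx)
      · rintro _ ⟨y, hy, rfl⟩
        rw [fendo_fbc, ← fbc_smul]
        congr 1
        ext i
        have := hφY y hy i
        simpa [sub_eq_zero] using this
      · simp
      · intro x y _ _ hx hy; simp [hx, hy]
      · intro s x _ hx; simp [hx, smul_comm s]
    simp [this]

/-- Descent along a linear functional. -/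
lemma AF.desc {R T : Type*} [CommRing R] [CommRing T] (f : R →+* T)
    {K : Submodule R (ι →₀ R)} {I : Ideal T} {J : Ideal R} {a : T} (ρ : T →+ R)
    (hρ : ∀ r t, ρ (f r * t) = r * ρ t) (hIJ : ∀ t ∈ I, ρ t ∈ J)
    (h : AF (fext f K) I a) : AF K J (ρ a) := by
  classical
  intro X hX
  obtain ⟨φ, hφ, hφX⟩ := h (X.image (fbc ι f)) (by
    intro x hx
    obtain ⟨y, hy, rfl⟩ := Finset.mem_image.mp hx
    exact fbc_mem_fext f K (hX y hy))
  let P : (ι →₀ T) →+ (ι →₀ R) := Finsupp.mapRange.addMonoidHom ρ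
  have hPs : ∀ (t : T) (y : ι →₀ R), P (t • fbc ι f y) = ρ t • y := by
    intro t y
    ext i
    simp [P, mul_comm t, hρ, mul_comm (ρ t)]
  have hPK : ∀ z ∈ fext f K, P z ∈ K := by
    intro z hz
    suffices H : ∀ t : T, P (t • z) ∈ K by simpa using H 1
    refine Submodule.span_induction (p := fun z _ => ∀ t : T, P (t • z) ∈ K) ?_ ?_ ?_ ?_ hz
    · rintro _ ⟨y, hy, rfl⟩ t
      rw [hPs]; exact K.smul_mem _ hy
    · simp
    · intro x y _ _ hx hy t
      rw [smul_add, map_add]; exact K.add_mem (hx t) (hy t)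
    · intro s x _ hx t
      rw [smul_smul]; exact hx _
  have hPr : ∀ (r : R) (z : ι →₀ T), P (f r • z) = r • P z := by
    intro r z; ext i; simp [P, hρ]
  let ψ : (ι →₀ R) →ₗ[R] (ι →₀ R) :=
    { toFun := fun x => P (φ (fbc ι f x))
      map_add' := by intro x y; simp
      map_smul' := by intro r x; simp [fbc_smul, hPr] }
  refine ⟨ψ, fun y => hPK _ (hφ _), ?_⟩
  intro x hx i
  have h1 := hIJ _ (hφX _ (Finset.mem_image_of_mem _ hx) i)
  have h2 : ρ ((φ (fbc ι f x) - a • fbc ι f x) i) = (ψ x - ρ a • x) i := by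
    rw [Finsupp.sub_apply, map_sub, Finsupp.sub_apply, ← hPs]
    rfl
  rwa [h2] at h1

lemma coord_mem {R : Type*} [CommRing R] (I : Ideal R) (φ : (ι →₀ R) →ₗ[R] (ι →₀ R))
    (x : ι →₀ R) (hx : ∀ i, x i ∈ I) (j : ι) : φ x j ∈ I := by
  have : x = Finsupp.linearCombination R (fun i => Finsupp.single i (1 : R)) x := by
    simp [Finsupp.linearCombination_apply]
  rw [this, Finsupp.linearCombination_apply, Finsupp.sum, map_sum, Finsupp.finsetSum_apply]
  refine Ideal.sum_mem _ (fun i _ => ?_)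
  rw [map_smul]
  simpa using I.mul_mem_right _ (hx i)

lemma AF.step {R S : Type*} [CommRing R] [CommRing S] (f : R →+* S)
    {K : Submodule R (ι →₀ R)} {c a a' : R} {I J : Ideal S} (hS : AF (fext f K) ⊥ (f c))
    (h : AF K (I.comap f) a) (h' : AF K (J.comap f) a') :
    AF K ((I * J).comap f) (c * (a' * a)) := by
  classical
  intro X hX
  obtain ⟨φ, hφ, hφX⟩ := h X hX
  -- the errors
  let y : (ι →₀ R) → (ι →₀ R) := fun x => φ x - a • x
  have hyK : ∀ x ∈ X, y x ∈ K := fun x hx => K.sub_mem (hφ x) (K.smul_mem _ (hX x hx))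
  obtain ⟨θ, hθ, hθX⟩ := hS (X.image (fun x => fbc ι f (y x))) (by
    intro z hz
    obtain ⟨x, hx, rfl⟩ := Finset.mem_image.mp hz
    exact fbc_mem_fext f K (hyK x hx))
  have hθy : ∀ x ∈ X, f c • fbc ι f (y x) = θ (fbc ι f (y x)) := by
    intro x hx
    ext i
    have := hθX _ (Finset.mem_image_of_mem (fun x => fbc ι f (y x)) hx) i
    simp only [Ideal.mem_bot, Finsupp.sub_apply, sub_eq_zero] at this
    exact this.symm
  -- finite set of basis vectors
  let E : Finset ι := X.biUnion (fun x => (fbc ι f (y x)).support)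
  obtain ⟨Y, hY, hEY⟩ := fext_fin f K (E.image (fun i => θ (Finsupp.single i 1))) (by
    intro z hz
    obtain ⟨i, _, rfl⟩ := Finset.mem_image.mp hz
    exact hθ _)
  obtain ⟨ψ, hψ, hψY⟩ := h' Y hY
  let Δ : (ι →₀ S) →ₗ[S] (ι →₀ S) := fendo f ψ - f a' • LinearMap.id
  have hΔ : ∀ z : ι →₀ R, Δ (fbc ι f z) = fbc ι f (ψ z - a' • z) := by
    intro z
    simp only [Δ, LinearMap.sub_apply, fendo_fbc, LinearMap.smul_apply, LinearMap.id_apply, map_sub,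
      fbc_smul]
  have hΔE : ∀ i ∈ E, ∀ j, Δ (θ (Finsupp.single i 1)) j ∈ J := by
    intro i hi
    refine Submodule.span_induction (p := fun z _ => ∀ j, Δ z j ∈ J) ?_ ?_ ?_ ?_
      (hEY _ (Finset.mem_image_of_mem (fun i => θ (Finsupp.single i 1)) hi))
    · rintro _ ⟨z, hz, rfl⟩ j
      rw [hΔ]
      exact hψY z hz j
    · simp
    · intro u v _ _ hu hv j
      rw [map_add, Finsupp.add_apply]; exact J.add_mem (hu j) (hv j)
    · intro s u _ hu j
      rw [map_smul]; exact J.mul_mem_left _ (hu j)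
  refine ⟨c • (a' • φ + a • ψ - ψ ∘ₗ φ), ?_, ?_⟩
  · intro z
    exact K.smul_mem _ (K.sub_mem (K.add_mem (K.smul_mem _ (hφ _)) (K.smul_mem _ (hψ _))) (hψ _))
  · intro x hx j
    have e1 : (c • (a' • φ + a • ψ - ψ ∘ₗ φ)) x - (c * (a' * a)) • x
        = - (c • (ψ (y x) - a' • y x)) := by
      simp only [y, LinearMap.smul_apply, LinearMap.sub_apply, LinearMap.add_apply,
        LinearMap.comp_apply, map_sub, map_smul]
      module
    rw [e1, Finsupp.neg_apply]
    refine neg_mem ?_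
    change f _ ∈ I * J
    have e2 : f ((c • (ψ (y x) - a' • y x)) j) = Δ (θ (fbc ι f (y x))) j := by
      rw [← hθy x hx, map_smul, hΔ, ← fbc_smul, fbc_apply]
    rw [e2]
    have e3 : fbc ι f (y x) = ∑ i ∈ (fbc ι f (y x)).support, (fbc ι f (y x) i) •
        Finsupp.single i (1 : S) := by
      conv_lhs => rw [← Finsupp.sum_single (fbc ι f (y x))]
      simp [Finsupp.sum]
    rw [e3, map_sum, map_sum, Finsupp.finsetSum_apply]
    refine Ideal.sum_mem _ (fun i hi => ?_)
    rw [map_smul, map_smul, Finsupp.smul_apply, smul_eq_mul]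
    refine Ideal.mul_mem_mul (hφX x hx i) (hΔE i ?_ j)
    exact Finset.mem_biUnion.mpr ⟨x, hx, hi⟩

lemma AF.conductor {R S : Type*} [CommRing R] [CommRing S] (f : R →+* S)
    {K : Submodule R (ι →₀ R)} {c : R} {J : Ideal S} (hS : AF (fext f K) ⊥ (f c))
    (hJ : ∀ s : S, ∃ r : R, f c ^ 2 * s - f r ∈ J) :
    AF K (J.comap f) (c ^ 3) := by
  classical
  intro X hX
  obtain ⟨θ, hθ, hθX⟩ := hS (X.image (fbc ι f)) (by
    intro z hz
    obtain ⟨x, hx, rfl⟩ := Finset.mem_image.mp hz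
    exact fbc_mem_fext f K (hX x hx))
  have key : ∀ z ∈ fext f K, ∃ k ∈ K, ∀ j, (f c ^ 2 • z - fbc ι f k) j ∈ J := by
    intro z hz
    suffices H : ∀ t : S, ∃ k ∈ K, ∀ j, (f c ^ 2 • (t • z) - fbc ι f k) j ∈ J by simpa using H 1
    refine Submodule.span_induction (p := fun z _ => ∀ t : S, ∃ k ∈ K, ∀ j,
      (f c ^ 2 • (t • z) - fbc ι f k) j ∈ J) ?_ ?_ ?_ ?_ hz
    · rintro _ ⟨y, hy, rfl⟩ t
      obtain ⟨r, hr⟩ := hJ t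
      refine ⟨r • y, K.smul_mem _ hy, fun j => ?_⟩
      have := J.mul_mem_right (f (y j)) hr
      simpa [sub_mul, mul_assoc] using this
    · intro t; exact ⟨0, K.zero_mem, by simp⟩
    · intro u v _ _ hu hv t
      obtain ⟨k, hk, h1⟩ := hu t
      obtain ⟨l, hl, h2⟩ := hv t
      refine ⟨k + l, K.add_mem hk hl, fun j => ?_⟩
      have := J.add_mem (h1 j) (h2 j)
      have e : f c ^ 2 • (t • (u + v)) - fbc ι f (k + l)
          = (f c ^ 2 • (t • u) - fbc ι f k) + (f c ^ 2 • (t • v) - fbc ι f l) := by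
        rw [map_add, smul_add, smul_add]; abel
      rw [e]
      exact this
    · intro s u _ hu t
      rw [smul_smul t s u]; exact hu (t * s)
  choose k hkK hk using fun i : ι => key (θ (Finsupp.single i 1)) (hθ _)
  let φ : (ι →₀ R) →ₗ[R] (ι →₀ R) := Finsupp.linearCombination R k
  have hφ : ∀ (x : ι →₀ R) j, (f c ^ 2 • θ (fbc ι f x) - fbc ι f (φ x)) j ∈ J := by
    intro x
    induction x using Finsupp.induction_linear with
    | zero => simp
    | add x y hx hy =>
      intro j
      have := J.add_mem (hx j) (hy j)
      have e : f c ^ 2 • θ (fbc ι f (x + y)) - fbc ι f (φ (x + y))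
          = (f c ^ 2 • θ (fbc ι f x) - fbc ι f (φ x)) + (f c ^ 2 • θ (fbc ι f y) - fbc ι f (φ y)) := by
        rw [map_add, map_add, map_add, map_add, smul_add]; abel
      rw [e]
      exact this
    | single i r =>
      intro j
      have h1 : fbc ι f (Finsupp.single i r) = f r • Finsupp.single i (1 : S) := by
        simp [fbc]
      have := J.mul_mem_left (f r) (hk i j)
      rw [h1]
      convert this using 1
      simp only [φ, Finsupp.linearCombination_single, fbc_smul, map_smul, Finsupp.sub_apply,
        Finsupp.smul_apply, smul_eq_mul]
      ring
  refine ⟨φ, ?_, ?_⟩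
  · intro y
    rw [show φ y = Finsupp.linearCombination R k y from rfl, Finsupp.linearCombination_apply]
    exact Submodule.sum_mem _ (fun i _ => K.smul_mem _ (hkK i))
  · intro x hx j
    have h1 := hθX _ (Finset.mem_image_of_mem (fbc ι f) hx) j
    simp only [Ideal.mem_bot, Finsupp.sub_apply, sub_eq_zero] at h1
    have h2 := neg_mem (hφ x j)
    change f _ ∈ J
    convert h2 using 1
    simp only [Finsupp.sub_apply, Finsupp.smul_apply, smul_eq_mul, h1, map_sub, fbc_apply, map_mul,
      map_pow]
    ring

lemma AF.mono {R : Type*} [CommRing R] {K : Submodule R (ι →₀ R)} {I J : Ideal R} {a : R}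
    (h : AF K I a) (hIJ : I ≤ J) : AF K J a := by
  intro X hX
  obtain ⟨φ, h1, h2⟩ := h X hX
  exact ⟨φ, h1, fun x hx i => hIJ (h2 x hx i)⟩

lemma AF.smul' {R : Type*} [CommRing R] {K : Submodule R (ι →₀ R)} {I J : Ideal R} {a : R}
    (h : AF K I a) (c : R) (hIJ : ∀ x ∈ I, c * x ∈ J) : AF K J (c * a) := by
  intro X hX
  obtain ⟨φ, h1, h2⟩ := h X hX
  refine ⟨c • φ, fun y => K.smul_mem _ (h1 y), fun x hx i => ?_⟩
  have := hIJ _ (h2 x hx i)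
  simpa [mul_sub, mul_assoc] using this

lemma AF.add {R : Type*} [CommRing R] {K : Submodule R (ι →₀ R)} {I : Ideal R} {a b : R}
    (h : AF K I a) (h' : AF K I b) : AF K I (a + b) := by
  intro X hX
  obtain ⟨φ, h1, h2⟩ := h X hX
  obtain ⟨ψ, h3, h4⟩ := h' X hX
  refine ⟨φ + ψ, fun y => K.add_mem (h1 y) (h3 y), fun x hx i => ?_⟩
  have := I.add_mem (h2 x hx i) (h4 x hx i)
  rw [← Finsupp.add_apply] at this
  convert this using 2
  rw [LinearMap.add_apply]; module

lemma AF.top {R : Type*} [CommRing R] (K : Submodule R (ι →₀ R)) (a : R) : AF K ⊤ a :=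
  fun _ _ => ⟨0, by simp, by simp⟩

lemma AF.zero {R : Type*} [CommRing R] (K : Submodule R (ι →₀ R)) (I : Ideal R) : AF K I 0 :=
  fun _ _ => ⟨0, by simp, by simp⟩

end AFcore

section Splitting

open Polynomial

/-- A ring extension with an `R`-linear retraction. -/
def Retr {R T : Type*} [CommRing R] [CommRing T] (f : R →+* T) (ρ : T →+ R) : Prop :=
  (∀ r t, ρ (f r * t) = r * ρ t) ∧ ρ 1 = 1

lemma Retr.comp {R T U : Type*} [CommRing R] [CommRing T] [CommRing U] {f : R →+* T} {ρ : T →+ R}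
    {g : T →+* U} {σ : U →+ T} (h : Retr f ρ) (h' : Retr g σ) : Retr (g.comp f) (ρ.comp σ) := by
  refine ⟨fun r t => ?_, ?_⟩
  · simp [h'.1, h.1]
  · simp [h'.2, h.2]

lemma exists_split_one (d : ℕ) : ∀ {R : Type u} [CommRing R] (p : R[X]), p.Monic →
    p.natDegree = d → ∃ (T : Type u) (_ : CommRing T) (f : R →+* T) (ρ : T →+ R),
      Retr f ρ ∧ ∃ r : Fin d → T, p.map f = ∏ i, (X - C (r i)) := by
  induction d with
  | zero =>
    intro R _ p hp hd
    refine ⟨R, inferInstance, RingHom.id R, AddMonoidHom.id R, ⟨by simp, by simp⟩, Fin.elim0, ?_⟩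
    simp [hp.natDegree_eq_zero.mp hd]
  | succ d ih =>
    intro R _ p hp hd
    rcases subsingleton_or_nontrivial R with hR | hR
    · exact ⟨R, inferInstance, RingHom.id R, AddMonoidHom.id R, ⟨by simp, by simp⟩, fun _ => 0,
        Subsingleton.elim _ _⟩
    obtain ⟨q, hq⟩ : X - C (AdjoinRoot.root p) ∣ p.map (AdjoinRoot.of p) := by
      rw [dvd_iff_isRoot, IsRoot.def, Polynomial.eval_map, AdjoinRoot.eval₂_root]
    have hqm : q.Monic := .of_mul_monic_left (monic_X_sub_C (.root _)) (hq ▸ hp.map _)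
    have hpu : p.degree ≠ 0 := by
      rw [degree_eq_natDegree hp.ne_zero, hd]; exact_mod_cast Nat.succ_ne_zero d
    have : Nontrivial (AdjoinRoot p) := by
      refine Ideal.Quotient.nontrivial_iff.mpr ?_
      intro h
      rw [Ideal.span_singleton_eq_top] at h
      have := hp.eq_one_of_isUnit h
      rw [this] at hd
      simp at hd
    have hqd : q.natDegree = d := by
      have := hp.natDegree_map (AdjoinRoot.of p)
      rw [hq, Monic.natDegree_mul (monic_X_sub_C _) hqm, natDegree_X_sub_C, hd] at this
      omega
    obtain ⟨T, _, g, σ, hσ, r, hr⟩ := ih q hqm hqd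
    let ρ : AdjoinRoot p →ₗ[R] R := (lcoeff R 0) ∘ₗ AdjoinRoot.modByMonicHom hp
    have hρ : Retr (AdjoinRoot.of p) ρ.toAddMonoidHom := by
      refine ⟨fun a t => ?_, ?_⟩
      · have := ρ.map_smul a t
        rw [Algebra.smul_def] at this
        exact this
      · change ρ (AdjoinRoot.mk p 1) = 1
        simp only [ρ, LinearMap.comp_apply, AdjoinRoot.modByMonicHom_mk, lcoeff_apply]
        rw [(modByMonic_eq_self_iff hp).mpr]
        · simp
        · rw [degree_one, degree_eq_natDegree hp.ne_zero, hd]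
          exact_mod_cast Nat.succ_pos d
    refine ⟨T, inferInstance, g.comp (AdjoinRoot.of p), _, hρ.comp hσ,
      Fin.cons (g (AdjoinRoot.root p)) r, ?_⟩
    rw [← Polynomial.map_map, hq, Polynomial.map_mul, hr, Fin.prod_univ_succ]
    simp

lemma exists_split (n d : ℕ) {R : Type u} [CommRing R] (p : Fin n → R[X])
    (hp : ∀ i, (p i).Monic) (hd : ∀ i, (p i).natDegree = d) :
    ∃ (T : Type u) (_ : CommRing T) (f : R →+* T) (ρ : T →+ R),
      Retr f ρ ∧ ∀ i, ∃ r : Fin d → T, (p i).map f = ∏ j, (X - C (r j)) := by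
  induction n with
  | zero => exact ⟨R, inferInstance, RingHom.id R, AddMonoidHom.id R, ⟨by simp, by simp⟩, fun i => i.elim0⟩
  | succ n ih =>
    obtain ⟨T, _, f, ρ, hf, h⟩ := ih (fun i => p i.succ) (fun i => hp _) (fun i => hd _)
    rcases subsingleton_or_nontrivial T with hT | hT
    · exact ⟨T, inferInstance, f, ρ, hf, fun i => ⟨0, Subsingleton.elim _ _⟩⟩
    obtain ⟨U, _, g, σ, hg, r, hr⟩ := exists_split_one d ((p 0).map f) ((hp 0).map f)
      (by rw [(hp 0).natDegree_map, hd])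
    refine ⟨U, inferInstance, g.comp f, _, hf.comp hg, fun i => ?_⟩
    refine Fin.cases ?_ (fun i => ?_) i
    · exact ⟨r, by rw [← Polynomial.map_map, hr]⟩
    · obtain ⟨s, hs⟩ := h i
      refine ⟨fun j => g (s j), ?_⟩
      rw [← Polynomial.map_map, hs, Polynomial.map_prod]
      simp

/-- Combinatorial vanishing of a product of sums of ideals. -/
lemma prod_sum_ideal_le {S : Type*} [CommRing S] (n d : ℕ) (I : Fin n → Fin d → Ideal S)
    (h : ∀ i, ∏ k, I i k = ⊥) : ∏ j : Fin n → Fin d, ∑ i, I i (j i) = ⊥ := by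
  classical
  rw [Finset.prod_univ_sum, eq_bot_iff, ← Ideal.zero_eq_bot, Ideal.sum_eq_sup]
  refine Finset.sup_le (fun g _ => ?_)
  obtain ⟨i, hi⟩ : ∃ i, ∀ k, ∃ j : Fin n → Fin d, g j = i ∧ j i = k := by
    by_contra hcon
    push Not at hcon
    choose k hk using hcon
    exact hk (g k) k rfl rfl
  choose J hJ1 hJ2 using hi
  have hinj : Function.Injective J := fun a b hab => by rw [← hJ2 a, ← hJ2 b, hab]
  rw [Ideal.zero_eq_bot, ← h i, ← Finset.prod_mul_prod_compl (Finset.univ.image J)]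
  refine Ideal.mul_le_left.trans ?_
  rw [Finset.prod_image (fun a _ b _ hab => hinj hab)]
  refine le_of_eq (Finset.prod_congr rfl (fun k _ => ?_))
  rw [hJ1 k, hJ2 k]

end Splitting

section Core

open Polynomial

variable {ι : Type*}

lemma fext_comp {R T U : Type*} [CommRing R] [CommRing T] [CommRing U] (f : R →+* T) (g : T →+* U)
    (K : Submodule R (ι →₀ R)) : fext (g.comp f) K = fext g (fext f K) := by
  have hc : ∀ x : ι →₀ R, fbc ι (g.comp f) x = fbc ι g (fbc ι f x) := by
    intro x; ext i; simp
  apply le_antisymm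
  · refine Submodule.span_le.mpr ?_
    rintro _ ⟨x, hx, rfl⟩
    rw [hc]
    exact fbc_mem_fext _ _ (fbc_mem_fext _ _ hx)
  · refine Submodule.span_le.mpr ?_
    rintro _ ⟨y, hy, rfl⟩
    refine Submodule.span_induction (p := fun y _ => fbc ι g y ∈ fext (g.comp f) K) ?_ ?_ ?_ ?_ hy
    · rintro _ ⟨x, hx, rfl⟩
      rw [← hc]
      exact fbc_mem_fext _ _ hx
    · simp
    · intro x y _ _ hx hy
      rw [map_add]; exact Submodule.add_mem _ hx hy
    · intro s x _ hx
      rw [fbc_smul]; exact Submodule.smul_mem _ _ hx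

lemma exists_monic_kill {R S : Type*} [CommRing R] [Nontrivial R] [CommRing S] (g : R →+* S) (c : R)
    {n : ℕ} (e : Fin n → S) (hQ : ∀ s, ∃ r : Fin n → R, g c * s = ∑ h, g (r h) * e h) (i : Fin n) :
    ∃ p : R[X], p.Monic ∧ p.natDegree = n + 1 ∧ p.eval₂ g (g c * e i) = 0 := by
  choose A hA using fun k : Fin n => hQ (e i * e k)
  let M : Matrix (Fin n) (Fin n) R := Matrix.of A
  let b := g c * e i
  have h0 : (Matrix.scalar (Fin n) b - M.map g).mulVec e = 0 := by
    ext k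
    have : (M.map g).mulVec e k = ∑ h, g (A k h) * e h := by
      simp [Matrix.mulVec, dotProduct, M]
    rw [Matrix.sub_mulVec, Pi.sub_apply, this, ← hA k]
    simp [Matrix.mulVec_diagonal, b, mul_assoc]
  have h1 : ∀ k, (Matrix.scalar (Fin n) b - M.map g).det * e k = 0 := by
    intro k
    have := congrArg (fun v => (Matrix.scalar (Fin n) b - M.map g).adjugate.mulVec v k) h0
    simpa [Matrix.mulVec_mulVec, Matrix.adjugate_mul, Matrix.smul_mulVec] using this
  refine ⟨X * M.charpoly, monic_X.mul M.charpoly_monic, ?_, ?_⟩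
  · rw [monic_X.natDegree_mul M.charpoly_monic, natDegree_X, M.charpoly_natDegree_eq_dim]
    simp [add_comm]
  · rw [eval₂_mul, eval₂_X, ← Polynomial.eval_map, ← Matrix.charpoly_map, Matrix.eval_charpoly]
    rw [mul_assoc, mul_comm (e i), h1 i, mul_zero]

lemma core_split {R S : Type*} [CommRing R] [CommRing S] (g : R →+* S) (c : R)
    {n d : ℕ} (e : Fin n → S) (hQ : ∀ s, ∃ r : Fin n → R, g c * s = ∑ h, g (r h) * e h)
    (r : Fin n → Fin d → R) (hr : ∀ i, ∏ j, (g c * e i - g (r i j)) = 0)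
    {K : Submodule R (ι →₀ R)} (hS : AF (fext g K) ⊥ (g c)) :
    AF K ((⊥ : Ideal S).comap g) (c ^ (4 * d ^ n)) := by
  classical
  let J : (Fin n → Fin d) → Ideal S := fun j => ∑ i, Ideal.span {g c * e i - g (r i (j i))}
  have hJ : ∏ j, J j = ⊥ := by
    refine prod_sum_ideal_le n d (fun i k => Ideal.span {g c * e i - g (r i k)}) (fun i => ?_)
    rw [Ideal.prod_span_singleton, hr i]
    simp
  have key : ∀ s : Finset (Fin n → Fin d), AF K ((∏ j ∈ s, J j).comap g) (c ^ (4 * s.card)) := by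
    intro s
    induction s using Finset.induction_on with
    | empty => exact (AF.top K _).mono (by simp)
    | insert j s hj ih =>
      rw [Finset.prod_insert hj, Finset.card_insert_of_notMem hj, mul_comm (J j)]
      have h3 : AF K ((J j).comap g) (c ^ 3) := by
        refine AF.conductor g hS (fun s => ?_)
        obtain ⟨q, hq⟩ := hQ s
        refine ⟨∑ h, q h * r h (j h), ?_⟩
        have : g c ^ 2 * s - g (∑ h, q h * r h (j h))
            = ∑ h, g (q h) * (g c * e h - g (r h (j h))) := by
          rw [pow_two, mul_assoc, hq, map_sum, Finset.mul_sum, ← Finset.sum_sub_distrib]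
          refine Finset.sum_congr rfl (fun h _ => ?_)
          rw [map_mul]; ring
        rw [this]
        refine Ideal.sum_mem _ (fun h _ => Ideal.mul_mem_left _ _ ?_)
        have hle : Ideal.span {g c * e h - g (r h (j h))} ≤ J j := by
          simp only [J, Ideal.sum_eq_sup]
          exact Finset.le_sup (f := fun i => Ideal.span {g c * e i - g (r i (j i))})
            (Finset.mem_univ h)
        exact hle (Ideal.mem_span_singleton_self _)
      have := AF.step g hS ih h3
      convert this using 1
      ring
  have := key Finset.univ
  rw [hJ] at this
  simpa using this

theorem core {R S : Type u} [CommRing R] [CommRing S] (g : R →+* S) (c : R)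
    {n : ℕ} (e : Fin n → S) (hQ : ∀ s, ∃ r : Fin n → R, g c * s = ∑ h, g (r h) * e h)
    (hker : ∀ x, g x = 0 → c * x = 0)
    {K : Submodule R (ι →₀ R)} (hS : AF (fext g K) ⊥ (g c)) :
    AF K ⊥ (c ^ (4 * (n + 1) ^ n + 1)) := by
  classical
  rcases subsingleton_or_nontrivial R with hR | hR
  · rw [Subsingleton.elim (c ^ (4 * (n + 1) ^ n + 1)) 0]; exact AF.zero _ _
  choose p hp hpd hpe using exists_monic_kill g c e hQ
  obtain ⟨T, _, f, ρ, hρ, h⟩ := exists_split n (n + 1) p hp hpd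
  choose r hr using h
  let _ := f.toAlgebra
  let _ := g.toAlgebra
  let gT : T →+* T ⊗[R] S := Algebra.TensorProduct.includeLeftRingHom
  let iS : S →+* T ⊗[R] S := (Algebra.TensorProduct.includeRight : S →ₐ[R] T ⊗[R] S).toRingHom
  have hcomm : gT.comp f = iS.comp g := by
    ext x
    change (algebraMap R T x) ⊗ₜ[R] (1 : S) = (1 : T) ⊗ₜ[R] (algebraMap R S x)
    rw [Algebra.algebraMap_eq_smul_one, Algebra.algebraMap_eq_smul_one, smul_tmul]
  have hcomm' : ∀ x, gT (f x) = iS (g x) := fun x => RingHom.congr_fun hcomm x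
  have hST : AF (fext gT (fext f K)) ⊥ (gT (f c)) := by
    rw [← fext_comp, hcomm, fext_comp, hcomm']
    exact hS.asc iS
  have hQT : ∀ s, ∃ r : Fin n → T, gT (f c) * s = ∑ h, gT (r h) * iS (e h) := by
    intro s
    induction s using TensorProduct.induction_on with
    | zero => exact ⟨0, by simp⟩
    | add x y hx hy =>
      obtain ⟨a, ha⟩ := hx
      obtain ⟨b, hb⟩ := hy
      refine ⟨a + b, ?_⟩
      rw [mul_add, ha, hb]
      simp [add_mul, Finset.sum_add_distrib]
    | tmul t s =>
      obtain ⟨a, ha⟩ := hQ s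
      refine ⟨fun h => t * f (a h), ?_⟩
      have e1 : t ⊗ₜ[R] s = gT t * iS s := by
        change _ = (t ⊗ₜ[R] (1 : S)) * ((1 : T) ⊗ₜ[R] s)
        simp
      rw [e1, hcomm', mul_left_comm, ← map_mul iS, ha, map_sum, Finset.mul_sum]
      refine Finset.sum_congr rfl (fun h _ => ?_)
      rw [map_mul, map_mul, hcomm', mul_assoc]
  have hprod : ∀ i, ∏ j, (gT (f c) * iS (e i) - gT (r i j)) = 0 := by
    intro i
    have h1 : ((p i).map f).eval₂ gT (iS (g c * e i)) = 0 := by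
      rw [eval₂_map, hcomm, ← Polynomial.hom_eval₂, hpe i, map_zero]
    rw [hr i, eval₂_finsetProd] at h1
    simpa [hcomm'] using h1
  have h1 := core_split gT (f c) (fun h => iS (e h)) hQT r hprod hST
  have h2 : AF K ((⊥ : Ideal S).comap g) (ρ (f c ^ (4 * (n + 1) ^ n))) := by
    refine AF.desc f ρ hρ.1 ?_ h1
    intro t ht
    let ρl : T →ₗ[R] R :=
      { toFun := ρ
        map_add' := ρ.map_add
        map_smul' := fun a t => hρ.1 a t }
    have h3 : t ⊗ₜ[R] (1 : S) = 0 := ht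
    have h4 := congrArg ((TensorProduct.lid R S).toLinearMap ∘ₗ ρl.rTensor S) h3
    simp only [LinearMap.comp_apply, LinearMap.rTensor_tmul, map_zero] at h4
    have h5 : g (ρ t) * 1 = 0 := h4
    simpa using h5
  have h3 : ρ (f c ^ (4 * (n + 1) ^ n)) = c ^ (4 * (n + 1) ^ n) := by
    rw [← map_pow, ← mul_one (f _), hρ.1, hρ.2, mul_one]
  rw [h3] at h2
  have h4 := h2.smul' (J := ⊥) c (by intro x hx; exact hker x hx)
  rwa [← pow_succ'] at h4

end Core

section PolyTrick

variable {ι : Type*}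

lemma AF.sum {R κ : Type*} [CommRing R] {K : Submodule R (ι →₀ R)} {I : Ideal R} (s : Finset κ)
    (a : κ → R) (h : ∀ k ∈ s, AF K I (a k)) : AF K I (∑ k ∈ s, a k) := by
  classical
  induction s using Finset.induction_on with
  | empty => simpa using AF.zero K I
  | insert k s hk ih =>
    rw [Finset.sum_insert hk]
    exact (h k (Finset.mem_insert_self _ _)).add
      (ih fun j hj => h j (Finset.mem_insert_of_mem hj))

lemma AF.smul {R : Type*} [CommRing R] {K : Submodule R (ι →₀ R)} {I : Ideal R} {a : R}
    (h : AF K I a) (c : R) : AF K I (c * a) :=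
  h.smul' c (fun _ hx => I.mul_mem_left _ hx)

theorem poly_trick {R S : Type u} [CommRing R] [CommRing S] (g : R →+* S) {r : ℕ} (a : Fin r → R)
    {n : ℕ} (e : Fin n → S)
    (hQ : ∀ i, ∀ s, ∃ r : Fin n → R, g (a i) * s = ∑ h, g (r h) * e h)
    (hker : ∀ i, ∀ x, g x = 0 → a i * x = 0)
    {K : Submodule R (ι →₀ R)} (hS : ∀ i, AF (fext g K) ⊥ (g (a i)))
    (ρ : MvPolynomial (Fin r) R →ₗ[R] R) :
    AF K ⊥ (ρ ((∑ i, MvPolynomial.X i * MvPolynomial.C (a i)) ^ (4 * (n + 1) ^ n + 1))) := by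
  classical
  let G : MvPolynomial (Fin r) R →+* MvPolynomial (Fin r) S := MvPolynomial.map g
  let c : MvPolynomial (Fin r) R := ∑ i, MvPolynomial.X i * MvPolynomial.C (a i)
  have hGc : G c = ∑ i, MvPolynomial.X i * MvPolynomial.C (g (a i)) := by simp [G, c]
  have hcomm : G.comp MvPolynomial.C = MvPolynomial.C.comp g := by
    ext1 x; simp [G]
  have h1 : AF (fext G (fext MvPolynomial.C K)) ⊥ (G c) := by
    rw [← fext_comp, hcomm, fext_comp, hGc]
    exact AF.sum _ _ (fun i _ => ((hS i).asc MvPolynomial.C).smul _)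
  have hQ' : ∀ s, ∃ r : Fin n → MvPolynomial (Fin r) R,
      G c * s = ∑ h, G (r h) * MvPolynomial.C (e h) := by
    intro s
    induction s using MvPolynomial.induction_on' with
    | monomial α s =>
      choose q hq using fun i => hQ i s
      refine ⟨fun h => ∑ i, MvPolynomial.X i * MvPolynomial.monomial α (q i h), ?_⟩
      have e1 : ∀ i, MvPolynomial.C (g (a i)) * MvPolynomial.monomial α s
          = ∑ h, MvPolynomial.monomial α (g (q i h)) * MvPolynomial.C (e h) := by
        intro i
        rw [MvPolynomial.C_mul_monomial, hq i, map_sum]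
        refine Finset.sum_congr rfl (fun h _ => ?_)
        rw [mul_comm (MvPolynomial.monomial _ _), MvPolynomial.C_mul_monomial, mul_comm]
      rw [hGc, Finset.sum_mul]
      simp only [mul_assoc, e1, Finset.mul_sum, map_sum, map_mul, Finset.sum_mul]
      rw [Finset.sum_comm]
      simp [G]
    | add x y hx hy =>
      obtain ⟨a, ha⟩ := hx
      obtain ⟨b, hb⟩ := hy
      refine ⟨a + b, ?_⟩
      rw [mul_add, ha, hb]
      simp [add_mul, Finset.sum_add_distrib]
  have hker' : ∀ x, G x = 0 → c * x = 0 := by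
    intro x hx
    have e1 : ∀ i, MvPolynomial.C (a i) * x = 0 := by
      intro i
      ext α
      rw [MvPolynomial.coeff_C_mul, MvPolynomial.coeff_zero]
      apply hker
      have := congrArg (MvPolynomial.coeff α) hx
      simpa [G, MvPolynomial.coeff_map] using this
    simp [c, Finset.sum_mul, mul_assoc, e1]
  have h2 := core G c (fun h => MvPolynomial.C (e h)) hQ' hker' h1
  refine AF.desc MvPolynomial.C ρ.toAddMonoidHom ?_ ?_ h2
  · intro x t
    have := ρ.map_smul x t
    rw [MvPolynomial.smul_eq_C_mul] at this
    exact this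
  · intro t ht
    rw [Ideal.mem_bot] at ht
    simp [ht]

lemma exists_functional {R : Type*} [CommRing R] {q r : ℕ} (lam : (Fin q → Fin r) → R)
    (hlam : ∀ (σ : Equiv.Perm (Fin q)) f, lam (f ∘ σ) = lam f) :
    ∃ ρ : MvPolynomial (Fin r) R →ₗ[R] R, ∀ a : Fin r → R,
      ρ ((∑ i, MvPolynomial.X i * MvPolynomial.C (a i)) ^ q) = ∑ f, lam f * ∏ k, a (f k) := by
  classical
  let D : (Fin q → Fin r) → (Fin r →₀ ℕ) := fun f => ∑ k, Finsupp.single (f k) 1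
  have hD : ∀ f f', D f = D f' → lam f = lam f' := by
    intro f f' h
    have hc : ∀ (f : Fin q → Fin r) i, D f i = Fintype.card {k // f k = i} := by
      intro f i
      simp [D, Finsupp.finsetSum_apply, Finsupp.single_apply, Fintype.card_subtype]
    let σ : Equiv.Perm (Fin q) := Equiv.ofFiberEquiv (f := f) (g := f') (fun i =>
      Fintype.equivOfCardEq (by rw [← hc, ← hc, h]))
    have : f = f' ∘ σ := by
      ext1 k; exact (Equiv.ofFiberEquiv_map _ k).symm
    rw [this, hlam]
  let Λ : (Fin r →₀ ℕ) → R := fun α => if h : ∃ f, D f = α then lam h.choose else 0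
  have hΛ : ∀ f, Λ (D f) = lam f := by
    intro f
    have h : ∃ f', D f' = D f := ⟨f, rfl⟩
    simp only [Λ, dif_pos h]
    exact hD _ _ h.choose_spec
  refine ⟨(MvPolynomial.basisMonomials (Fin r) R).constr R Λ, fun a => ?_⟩
  have hm : ∀ α, (MvPolynomial.basisMonomials (Fin r) R).constr R Λ
      (MvPolynomial.monomial α 1) = Λ α := by
    intro α
    have := (MvPolynomial.basisMonomials (Fin r) R).constr_basis R Λ α
    simpa using this
  have e1 : (∑ i, MvPolynomial.X i * MvPolynomial.C (a i)) ^ q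
      = ∑ f : Fin q → Fin r, (∏ k, a (f k)) • MvPolynomial.monomial (D f) (1 : R) := by
    have := Finset.prod_univ_sum (fun _ : Fin q => (Finset.univ : Finset (Fin r)))
      (fun _ i => (MvPolynomial.X i * MvPolynomial.C (a i) : MvPolynomial (Fin r) R))
    rw [Finset.prod_const, Finset.card_univ, Fintype.card_fin, Fintype.piFinset_univ] at this
    rw [this]
    refine Finset.sum_congr rfl (fun f _ => ?_)
    rw [Finset.prod_mul_distrib, ← map_prod, mul_comm, ← MvPolynomial.smul_eq_C_mul]
    congr 1
    simp only [MvPolynomial.X, D]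
    rw [MvPolynomial.monomial_sum_one]
  rw [e1, map_sum]
  refine Finset.sum_congr rfl (fun f _ => ?_)
  rw [map_smul, hm, hΛ, smul_eq_mul, mul_comm]

end PolyTrick

section FlatTrick

variable {V : Type v} [CommRing V] (m : Ideal V)

/-- The multiplication map `m ⊗ m → V`. -/
noncomputable def mmul : (m ⊗[V] m) →ₗ[V] V :=
  TensorProduct.lift ((LinearMap.mul V V).domRestrict₁₂ m m)

@[simp] lemma mmul_tmul (a b : m) : mmul m (a ⊗ₜ b) = (a : V) * b := rfl

lemma mmul_symm (x y : m ⊗[V] m) : mmul m x • y = mmul m y • x := by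
  induction x using TensorProduct.induction_on with
  | zero => simp
  | add x x' hx hx' => rw [map_add, add_smul, smul_add, hx, hx']
  | tmul a b =>
    induction y using TensorProduct.induction_on with
    | zero => simp
    | add y y' hy hy' => rw [map_add, add_smul, smul_add, hy, hy']
    | tmul c d =>
      have h1 : (a : V) • c = (c : V) • a := Subtype.ext (mul_comm _ _)
      have h2 : (b : V) • d = (d : V) • b := Subtype.ext (mul_comm _ _)
      rw [mmul_tmul, mmul_tmul, ← TensorProduct.smul_tmul_smul, h1, h2,
        TensorProduct.smul_tmul_smul]

lemma mmul_surj (hm : m * m = m) {a : V} (ha : a ∈ m) : ∃ x, mmul m x = a := by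
  rw [← hm] at ha
  refine Submodule.mul_induction_on ha ?_ ?_
  · intro a ha b hb
    exact ⟨(⟨a, ha⟩ : m) ⊗ₜ (⟨b, hb⟩ : m), rfl⟩
  · rintro _ _ ⟨x, rfl⟩ ⟨y, rfl⟩
    exact ⟨x + y, map_add _ _ _⟩

lemma mmul_mem (x : m ⊗[V] m) : mmul m x ∈ m := by
  induction x using TensorProduct.induction_on with
  | zero => simp
  | add x y hx hy => rw [map_add]; exact m.add_mem hx hy
  | tmul a b => exact m.mul_mem_left _ b.2

lemma flat_factor (hflat : Module.Flat V (m ⊗[V] m)) {q : ℕ} (x : Fin q → m ⊗[V] m) :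
    ∃ (r : ℕ) (z : Fin r → m ⊗[V] m) (v : Fin q → Fin r → V),
      (∀ k, x k = ∑ i, v k i • z i) ∧ ∀ k l i, mmul m (x k) * v l i = mmul m (x l) * v k i := by
  classical
  let X : (Fin q →₀ V) →ₗ[V] (m ⊗[V] m) := Finsupp.linearCombination V x
  let F : ((Fin q × Fin q) →₀ V) →ₗ[V] (Fin q →₀ V) := Finsupp.linearCombination V
    (fun p => mmul m (x p.1) • Finsupp.single p.2 1 - mmul m (x p.2) • Finsupp.single p.1 1)
  have h : X ∘ₗ F = 0 := by
    ext p
    simp [X, F, mmul_symm m (x p.1) (x p.2)]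
  obtain ⟨r, a, y, hy, ha⟩ := Module.Flat.exists_factorization_of_comp_eq_zero_of_free h
  refine ⟨r, fun i => y (Finsupp.single i 1), fun k i => a (Finsupp.single k 1) i, ?_, ?_⟩
  · intro k
    have h1 : x k = y (a (Finsupp.single k 1)) := by
      have := LinearMap.congr_fun hy (Finsupp.single k 1)
      simpa [X] using this
    rw [h1]
    have h2 : a (Finsupp.single k 1) = ∑ i, a (Finsupp.single k 1) i • Finsupp.single i (1 : V) := by
      ext j
      simp [Finsupp.finsetSum_apply, Finsupp.single_apply]
    conv_lhs => rw [h2, map_sum]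
    simp only [map_smul]
  · intro k l i
    have := LinearMap.congr_fun ha (Finsupp.single (k, l) 1)
    have := DFunLike.congr_fun this i
    simp only [F, LinearMap.comp_apply, Finsupp.linearCombination_single, one_smul, map_sub,
      map_smul, Finsupp.sub_apply, Finsupp.smul_apply, smul_eq_mul, LinearMap.zero_apply,
      Finsupp.zero_apply, sub_eq_zero] at this
    exact this

lemma flat_trick (hflat : Module.Flat V (m ⊗[V] m)) {q : ℕ} (x : Fin (q + 1) → m ⊗[V] m) :
    ∃ (r : ℕ) (z : Fin r → m ⊗[V] m) (lam : (Fin q → Fin r) → V),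
      (∀ (σ : Equiv.Perm (Fin q)) f, lam (f ∘ σ) = lam f) ∧
      ∑ f, lam f * ∏ k, mmul m (z (f k)) = ∏ k, mmul m (x k) := by
  classical
  obtain ⟨r, z, v, hx, hv⟩ := flat_factor m hflat x
  refine ⟨r, z, fun f => mmul m (x 0) * ∏ k, v (Fin.succ k) (f k), ?_, ?_⟩
  · intro σ
    induction σ using Equiv.Perm.swap_induction_on with
    | one => intro f; rfl
    | swap_mul σ a b hab ih =>
      intro f
      have e : f ∘ (Equiv.swap a b * σ : Equiv.Perm (Fin q)) = (f ∘ Equiv.swap a b) ∘ σ := rfl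
      rw [e, ih]
      beta_reduce
      have hb : b ∈ (Finset.univ : Finset (Fin q)).erase a := by simp [hab.symm]
      rw [← Finset.mul_prod_erase Finset.univ (fun k => v (Fin.succ k) ((f ∘ Equiv.swap a b) k))
          (Finset.mem_univ a),
        ← Finset.mul_prod_erase _ (fun k => v (Fin.succ k) ((f ∘ Equiv.swap a b) k)) hb,
        ← Finset.mul_prod_erase Finset.univ (fun k => v (Fin.succ k) (f k)) (Finset.mem_univ a),
        ← Finset.mul_prod_erase _ (fun k => v (Fin.succ k) (f k)) hb]
      have e2 : ∏ k ∈ (Finset.univ.erase a).erase b, v (Fin.succ k) ((f ∘ Equiv.swap a b) k)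
          = ∏ k ∈ (Finset.univ.erase a).erase b, v (Fin.succ k) (f k) := by
        refine Finset.prod_congr rfl (fun k hk => ?_)
        simp only [Finset.mem_erase] at hk
        rw [Function.comp_apply, Equiv.swap_apply_of_ne_of_ne hk.2.1 hk.1]
      rw [e2]
      simp only [Function.comp_apply, Equiv.swap_apply_left, Equiv.swap_apply_right]
      simp only [← mul_assoc]
      congr 1
      have h1 := hv 0 a.succ
      have h2 := hv a.succ b.succ
      have h3 := hv b.succ 0
      calc mmul m (x 0) * v a.succ (f b) * v b.succ (f a)
          = v 0 (f b) * (mmul m (x a.succ) * v b.succ (f a)) := by rw [h1]; ring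
        _ = (mmul m (x b.succ) * v 0 (f b)) * v a.succ (f a) := by rw [h2]; ring
        _ = _ := by rw [h3]; ring
  · have h1 : ∀ k, mmul m (x k) = ∑ i, v k i * mmul m (z i) := by
      intro k
      conv_lhs => rw [hx k, map_sum]
      simp
    rw [Fin.prod_univ_succ]
    simp only [fun k : Fin q => h1 k.succ]
    rw [Finset.prod_univ_sum, Finset.mul_sum, Fintype.piFinset_univ]
    refine Finset.sum_congr rfl (fun f _ => ?_)
    rw [Finset.prod_mul_distrib, mul_assoc]

theorem AF_descends {ι : Type*} (hm : m * m = m) (hflat : Module.Flat V (m ⊗[V] m))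
    (R S : Type u) [CommRing R] [CommRing S] [Algebra V R] (g : R →+* S)
    (hker : ∀ a ∈ m, ∀ x, g x = 0 → algebraMap V R a * x = 0)
    {n : ℕ} (e : Fin n → S)
    (hQ : ∀ a ∈ m, ∀ s, ∃ r : Fin n → R, g (algebraMap V R a) * s = ∑ h, g (r h) * e h)
    {K : Submodule R (ι →₀ R)} (hS : ∀ a ∈ m, AF (fext g K) ⊥ (g (algebraMap V R a)))
    (a : V) (ha : a ∈ m) : AF K ⊥ (algebraMap V R a) := by
  classical
  set q := 4 * (n + 1) ^ n + 1 with hq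
  let I : Ideal V :=
    { carrier := {v | AF K ⊥ (algebraMap V R v)}
      add_mem' := by
        intro x y hx hy
        simp only [Set.mem_ofPred_eq, map_add] at *
        exact hx.add hy
      zero_mem' := by
        simp only [Set.mem_ofPred_eq, map_zero]; exact AF.zero _ _
      smul_mem' := by
        intro c x hx
        simp only [Set.mem_ofPred_eq, smul_eq_mul, map_mul] at *
        exact hx.smul _ }
  have hprod : ∀ x : Fin (q + 1) → m ⊗[V] m, ∏ k, mmul m (x k) ∈ I := by
    intro x
    obtain ⟨r, z, lam, h1, h2⟩ := flat_trick m hflat x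
    obtain ⟨ρ, hρ⟩ := exists_functional (fun f => algebraMap V R (lam f))
      (fun σ f => by rw [h1])
    have h3 := poly_trick g (fun i => algebraMap V R (mmul m (z i))) e
      (fun i => hQ _ (mmul_mem m _)) (fun i => hker _ (mmul_mem m _))
      (fun i => hS _ (mmul_mem m _)) ρ
    rw [← hq, hρ] at h3
    change AF K ⊥ (algebraMap V R _)
    rw [← h2]
    simpa using h3
  have hpow : m ^ (q + 1) = m := by
    generalize q = q
    induction q with
    | zero => simp
    | succ q ih => rw [pow_succ, ih, hm]
  have hle : m ^ (q + 1) ≤ I := by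
    rw [Submodule.pow_eq_span_pow_set, Submodule.span_le]
    intro y hy
    obtain ⟨f, rfl⟩ := Set.mem_pow.mp hy
    choose x hx using fun k => mmul_surj m hm (f k).2
    have := hprod x
    simp only [hx] at this
    rw [List.prod_ofFn]
    exact this
  rw [hpow] at hle
  exact hle ha

end FlatTrick

section TorElem

lemma kill_homology_of {R : Type u} [CommRing R] (K : ChainComplex (ModuleCat.{u} R) ℕ) (c : R)
    (h : ∀ z : K.X 1, K.d 1 0 z = 0 → ∃ w : K.X 2, K.d 2 1 w = c • z) (x : K.homology 1) :
    c • x = 0 := by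
  obtain ⟨y, rfl⟩ := (ModuleCat.epi_iff_surjective (K.homologyπ 1)).mp inferInstance x
  have h1 : K.d 1 0 (K.iCycles 1 y) = 0 := by
    have := K.iCycles_d 1 0
    exact congrArg (fun f => f.hom y) this
  obtain ⟨w, hw⟩ := h _ h1
  have h2 : K.toCycles 2 1 w = c • y := by
    apply (ModuleCat.mono_iff_injective (K.iCycles 1)).mp inferInstance
    have := K.toCycles_i 2 1
    have := congrArg (fun f => f.hom w) this
    rw [map_smul, ← hw]
    exact this
  rw [← map_smul, ← h2]
  have := K.toCycles_comp_homologyπ 2 1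
  exact congrArg (fun f => f.hom w) this

lemma kill_homology_conv {R : Type u} [CommRing R] (K : ChainComplex (ModuleCat.{u} R) ℕ) (c : R)
    (h : ∀ x : K.homology 1, c • x = 0) (z : K.X 1) (hz : K.d 1 0 z = 0) :
    ∃ w : K.X 2, K.d 2 1 w = c • z := by
  let f : ModuleCat.of R R ⟶ K.X 1 := ModuleCat.ofHom (LinearMap.toSpanSingleton R _ z)
  have hf : f ≫ K.d 1 0 = 0 := by
    ext
    simp [f, hz]
  let y : K.cycles 1 := (K.liftCycles f 0 (by simp) hf) (1 : R)
  have hy : K.iCycles 1 y = z := by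
    have := K.liftCycles_i f 0 (by simp) hf
    have := congrArg (fun f => f.hom (1 : R)) this
    refine this.trans ?_
    simp [f]
  have h1 : K.homologyπ 1 (c • y) = 0 := by rw [map_smul]; exact h _
  have hex : (ShortComplex.mk _ _ (K.toCycles_comp_homologyπ 2 1)).Exact :=
    ShortComplex.exact_of_g_is_cokernel _ (K.homologyIsCokernel 2 1 (by simp))
  rw [ShortComplex.moduleCat_exact_iff] at hex
  obtain ⟨w, hw⟩ := hex _ h1
  refine ⟨w, ?_⟩
  have := K.toCycles_i 2 1
  have := congrArg (fun f => f.hom w) this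
  refine this.symm.trans ?_
  change K.iCycles 1 (K.toCycles 2 1 w) = c • z
  rw [← hy, ← map_smul]
  exact congrArg _ hw

lemma tor_kill_iff {R : Type u} [CommRing R] (M N : ModuleCat.{u} R) (P : ProjectiveResolution N)
    (c : R) : (∀ x : ((Tor (ModuleCat.{u} R) 1).obj M).obj N, c • x = 0) ↔
    ∀ z : M ⊗[R] (P.complex.X 1), (P.complex.d 1 0).hom.lTensor M z = 0 →
      ∃ w : M ⊗[R] (P.complex.X 2), (P.complex.d 2 1).hom.lTensor M w = c • z := by
  let F := (MonoidalCategory.tensoringLeft (ModuleCat.{u} R)).obj M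
  let K := (F.mapHomologicalComplex (ComplexShape.down ℕ)).obj P.complex
  let i : ((Tor (ModuleCat.{u} R) 1).obj M).obj N ≅ K.homology 1 := P.isoLeftDerivedObj F 1
  have h1 : (∀ x : ((Tor (ModuleCat.{u} R) 1).obj M).obj N, c • x = 0) ↔
      ∀ x : K.homology 1, c • x = 0 := by
    constructor
    · intro h x
      have := congrArg i.hom (h (i.inv x))
      rw [map_smul, map_zero, Iso.inv_hom_id_apply] at this
      exact this
    · intro h x
      have := congrArg i.inv (h (i.hom x))
      rw [map_smul, map_zero, Iso.hom_inv_id_apply] at this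
      exact this
  rw [h1]
  exact ⟨fun h => kill_homology_conv K c h, fun h => kill_homology_of K c h⟩

end TorElem

section TorAF

lemma rTensor_ker_lift {R F M Q : Type*} [CommRing R] [AddCommGroup F] [Module R F] [AddCommGroup M]
    [Module R M] [AddCommGroup Q] [Module R Q] (p : F →ₗ[R] M) (hp : Function.Surjective p)
    (y : F ⊗[R] Q) (hy : p.rTensor Q y = 0) :
    ∃ t : LinearMap.ker p ⊗[R] Q, (LinearMap.ker p).subtype.rTensor Q t = y := by
  have hex : Function.Exact ((LinearMap.ker p).subtype.rTensor Q) (p.rTensor Q) :=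
    rTensor_exact Q (LinearMap.exact_subtype_ker_map p) hp
  exact (hex _).mp hy

lemma T2mod {R : Type u} [CommRing R] {M P0 P1 P2 : Type u} [AddCommGroup M] [Module R M]
    [AddCommGroup P0] [Module R P0] [AddCommGroup P1] [Module R P1] [AddCommGroup P2] [Module R P2]
    (d1 : P1 →ₗ[R] P0) (d2 : P2 →ₗ[R] P1) (hd : Function.Exact d2 d1)
    {ι : Type u} (p : (ι →₀ R) →ₗ[R] M) (hp : Function.Surjective p) (c : R)
    (h : AF (LinearMap.ker p) ⊥ c) (z : M ⊗[R] P1) (hz : d1.lTensor M z = 0) :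
    ∃ w, d2.lTensor M w = c • z := by
  classical
  obtain ⟨y, rfl⟩ := LinearMap.rTensor_surjective P1 hp z
  have hcomm : ∀ (Q Q' : Type u) [AddCommGroup Q] [Module R Q] [AddCommGroup Q'] [Module R Q']
      (d : Q →ₗ[R] Q') (t : (ι →₀ R) ⊗[R] Q),
      d.lTensor M (p.rTensor Q t) = p.rTensor Q' (d.lTensor _ t) := by
    intro Q Q' _ _ _ _ d t
    rw [← LinearMap.comp_apply, ← LinearMap.comp_apply, LinearMap.lTensor_comp_rTensor,
      LinearMap.rTensor_comp_lTensor]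
  rw [hcomm] at hz
  obtain ⟨t, ht⟩ := rTensor_ker_lift (F := ι →₀ R) p hp _ hz
  -- find the endomorphism
  have key : ∃ φ : (ι →₀ R) →ₗ[R] (ι →₀ R), (∀ y, φ y ∈ LinearMap.ker p) ∧
      φ.rTensor P0 ((LinearMap.ker p).subtype.rTensor P0 t)
        = c • ((LinearMap.ker p).subtype.rTensor P0 t) := by
    have : ∃ X : Finset (ι →₀ R), (∀ x ∈ X, x ∈ LinearMap.ker p) ∧
        ∀ φ : (ι →₀ R) →ₗ[R] (ι →₀ R), (∀ x ∈ X, φ x = c • x) →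
        φ.rTensor P0 ((LinearMap.ker p).subtype.rTensor P0 t)
        = c • ((LinearMap.ker p).subtype.rTensor P0 t) := by
      clear ht
      induction t using TensorProduct.induction_on with
      | zero => exact ⟨∅, by simp, by simp⟩
      | tmul x q =>
        refine ⟨{(x : ι →₀ R)}, ?_, ?_⟩
        · intro y hy; rw [Finset.mem_singleton.mp hy]; exact x.2
        · intro φ hφ
          have := hφ x (Finset.mem_singleton_self _)
          simp only [LinearMap.rTensor_tmul, Submodule.subtype_apply, this,
            TensorProduct.smul_tmul']
      | add a b ha hb =>
        obtain ⟨X, hX, h1⟩ := ha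
        obtain ⟨Y, hY, h2⟩ := hb
        refine ⟨X ∪ Y, ?_, ?_⟩
        · intro x hx
          rcases Finset.mem_union.mp hx with h | h
          · exact hX x h
          · exact hY x h
        · intro φ hφ
          rw [map_add, map_add, smul_add, h1 φ (fun x hx => hφ x (Finset.mem_union_left _ hx)),
            h2 φ (fun x hx => hφ x (Finset.mem_union_right _ hx))]
    obtain ⟨X, hX, h1⟩ := this
    obtain ⟨φ, h2, h3⟩ := h X hX
    refine ⟨φ, h2, h1 φ (fun x hx => ?_)⟩
    ext i
    have := h3 x hx i
    rwa [Ideal.mem_bot, Finsupp.sub_apply, sub_eq_zero] at this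
  obtain ⟨φ, hφ, hφt⟩ := key
  rw [ht] at hφt
  have hpφ : p ∘ₗ φ = 0 := by
    ext i; exact hφ _
  have h0 : d1.lTensor (ι →₀ R) (φ.rTensor P1 y - c • y) = 0 := by
    rw [map_sub, map_smul, ← hφt, sub_eq_zero]
    rw [← LinearMap.comp_apply, ← LinearMap.comp_apply, LinearMap.lTensor_comp_rTensor,
      LinearMap.rTensor_comp_lTensor]
  obtain ⟨w, hw⟩ := (Module.Flat.lTensor_exact (ι →₀ R) hd _).mp h0
  refine ⟨- p.rTensor P2 w, ?_⟩
  rw [map_neg, hcomm, hw, map_sub, map_smul, ← LinearMap.comp_apply, ← LinearMap.rTensor_comp, hpφ]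
  simp

lemma lift_ex {R P A B : Type*} [CommRing R] [AddCommGroup P] [Module R P] [Module.Projective R P]
    [AddCommGroup A] [Module R A] [AddCommGroup B] [Module R B] (f : A →ₗ[R] B) (g : P →ₗ[R] B)
    (h : ∀ x, g x ∈ LinearMap.range f) : ∃ k : P →ₗ[R] A, f ∘ₗ k = g := by
  obtain ⟨k, hk⟩ := Module.projective_lifting_property f.rangeRestrict
    (g.codRestrict (LinearMap.range f) h) f.surjective_rangeRestrict
  refine ⟨k, ?_⟩
  ext x
  have := LinearMap.congr_fun hk x
  exact congrArg Subtype.val this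

/-- Comparison of a two term free presentation with a projective resolution. -/
lemma T1compare {R : Type u} [CommRing R] {M P0 P1 P2 Q0 Q1 N : Type u} [AddCommGroup M] [Module R M]
    [AddCommGroup P0] [Module R P0] [AddCommGroup P1] [Module R P1] [AddCommGroup P2] [Module R P2]
    [AddCommGroup Q0] [Module R Q0] [AddCommGroup Q1] [Module R Q1] [AddCommGroup N] [Module R N]
    [Module.Projective R P0] [Module.Projective R P1] [Module.Projective R Q0]
    [Module.Projective R Q1]
    (d1 : P1 →ₗ[R] P0) (d2 : P2 →ₗ[R] P1) (hd : Function.Exact d2 d1) (π : P0 →ₗ[R] N)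
    (hdπ : Function.Exact d1 π) (hπ : Function.Surjective π)
    (D : Q1 →ₗ[R] Q0) (τ : Q0 →ₗ[R] N) (hDτ : Function.Exact D τ) (hτ : Function.Surjective τ)
    (c : R) (h : ∀ z : M ⊗[R] P1, d1.lTensor M z = 0 → ∃ w, d2.lTensor M w = c • z)
    (z : M ⊗[R] Q1) (hz : D.lTensor M z = 0) :
    ∃ t : M ⊗[R] LinearMap.ker D, (LinearMap.ker D).subtype.lTensor M t = c • z := by
  obtain ⟨a0, ha0⟩ := Module.projective_lifting_property π τ hπ
  obtain ⟨b0, hb0⟩ := Module.projective_lifting_property τ π hτ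
  obtain ⟨a1, ha1⟩ := lift_ex d1 (a0 ∘ₗ D) (fun x => by
    refine (hdπ _).mp ?_
    rw [LinearMap.comp_apply, ← LinearMap.comp_apply, ha0]
    exact hDτ.apply_apply_eq_zero x)
  obtain ⟨b1, hb1⟩ := lift_ex D (b0 ∘ₗ d1) (fun x => by
    refine (hDτ _).mp ?_
    rw [LinearMap.comp_apply, ← LinearMap.comp_apply, hb0]
    exact hdπ.apply_apply_eq_zero x)
  obtain ⟨k, hk⟩ := lift_ex D (b0 ∘ₗ a0 - LinearMap.id) (fun x => by
    refine (hDτ _).mp ?_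
    rw [LinearMap.sub_apply, map_sub, LinearMap.comp_apply, ← LinearMap.comp_apply, hb0,
      ← LinearMap.comp_apply, ha0]
    simp)
  let s : Q1 →ₗ[R] Q1 := b1 ∘ₗ a1 - LinearMap.id - k ∘ₗ D
  have hs : ∀ x, s x ∈ LinearMap.ker D := by
    intro x
    have e1 : D (b1 (a1 x)) = b0 (a0 (D x)) := by
      have := LinearMap.congr_fun hb1 (a1 x)
      have h2 := LinearMap.congr_fun ha1 x
      simp only [LinearMap.comp_apply] at this h2
      rw [this, h2]
    have e2 : D (k (D x)) = b0 (a0 (D x)) - D x := LinearMap.congr_fun hk (D x)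
    simp [s, e1, e2]
  have hb : ∀ x, (b1 ∘ₗ d2) x ∈ LinearMap.ker D := by
    intro x
    have := LinearMap.congr_fun hb1 (d2 x)
    simp only [LinearMap.comp_apply] at this
    simp [this, hd.apply_apply_eq_zero x]
  obtain ⟨w, hw⟩ := h (a1.lTensor M z) (by
    rw [← LinearMap.comp_apply, ← LinearMap.lTensor_comp, ha1, LinearMap.lTensor_comp,
      LinearMap.comp_apply, hz, map_zero])
  refine ⟨((b1 ∘ₗ d2).codRestrict _ hb).lTensor M w - c • (s.codRestrict _ hs).lTensor M z, ?_⟩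
  rw [map_sub, map_smul, ← LinearMap.comp_apply, ← LinearMap.lTensor_comp,
    LinearMap.subtype_comp_codRestrict, ← LinearMap.comp_apply, ← LinearMap.lTensor_comp,
    LinearMap.subtype_comp_codRestrict, LinearMap.lTensor_comp, LinearMap.comp_apply, hw, map_smul]
  simp only [s, LinearMap.lTensor_sub, LinearMap.lTensor_comp, LinearMap.sub_apply,
    LinearMap.comp_apply, hz, LinearMap.lTensor_id, LinearMap.id_apply, map_zero]
  module

/-- The coordinate functionals on `M ⊗ (E → A)`. -/
noncomputable def evalc {A : Type*} [CommRing A] (M : Type*) [AddCommGroup M] [Module A M] {E : Type*}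
    (i : E) : M ⊗[A] (E → A) →ₗ[A] M :=
  (TensorProduct.rid A M).toLinearMap ∘ₗ (LinearMap.proj i : (E → A) →ₗ[A] A).lTensor M

@[simp] lemma evalc_tmul {A : Type*} [CommRing A] (M : Type*) [AddCommGroup M] [Module A M]
    {E : Type*} (i : E) (y : M) (u : E → A) : evalc M i (y ⊗ₜ[A] u) = u i • y := by
  simp [evalc]

lemma T1mod {A : Type u} [CommRing A] {M : Type u} [AddCommGroup M] [Module A M]
    {ι : Type u} (p : (ι →₀ A) →ₗ[A] M) (hp : Function.Surjective p) (c : A)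
    (H : ∀ N : ModuleCat.{u} A, ∀ x : ((Tor (ModuleCat.{u} A) 1).obj (ModuleCat.of A M)).obj N,
      c • x = 0) : AF (LinearMap.ker p) ⊥ c := by
  classical
  intro X hX
  let E : Finset ι := X.biUnion (fun x => x.support)
  let D : (E → A) →ₗ[A] (X → A) :=
    LinearMap.pi fun x => ∑ i : E, (x.1 i.1) • LinearMap.proj i
  have hDa : ∀ u x, D u x = ∑ i : E, x.1 i.1 * u i := by
    intro u x; simp [D]
  have hxsum : ∀ x ∈ X, x = ∑ i : E, x i.1 • Finsupp.single i.1 (1 : A) := by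
    intro x hx
    have h1 : x = ∑ i ∈ E, x i • Finsupp.single i (1 : A) := by
      conv_lhs => rw [← Finsupp.sum_single x]
      rw [Finsupp.sum]
      simp only [Finsupp.smul_single, smul_eq_mul, mul_one]
      refine Finset.sum_subset (fun i hi => Finset.mem_biUnion.mpr ⟨x, hx, hi⟩) ?_
      intro i _ hi
      simp [Finsupp.notMem_support_iff.mp hi]
    conv_lhs => rw [h1]
    exact (Finset.sum_coe_sort E (fun i => x i • Finsupp.single i (1 : A))).symm
  let N : ModuleCat.{u} A := ModuleCat.of A ((X → A) ⧸ LinearMap.range D)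
  let P : ProjectiveResolution N := projectiveResolution N
  have hT := (tor_kill_iff (ModuleCat.of A M) N P c).mp (H N)
  have hp0 : Module.Projective A (P.complex.X 0) :=
    (IsProjective.iff_projective _).mpr (P.projective 0)
  have hp1 : Module.Projective A (P.complex.X 1) :=
    (IsProjective.iff_projective _).mpr (P.projective 1)
  let z : M ⊗[A] (E → A) := ∑ i : E, p (Finsupp.single i.1 1) ⊗ₜ[A] Pi.single i 1
  have hz : D.lTensor M z = 0 := by
    have h1 : ∀ i : E, D (Pi.single i 1) = ∑ x : X, (x.1 i.1) • Pi.single x (1 : A) := by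
      intro i
      ext x
      rw [hDa]
      simp [Pi.single_apply]
    simp only [z, map_sum, LinearMap.lTensor_tmul, h1, TensorProduct.tmul_sum]
    rw [Finset.sum_comm]
    refine Finset.sum_eq_zero (fun x _ => ?_)
    simp only [TensorProduct.tmul_smul]
    simp only [TensorProduct.smul_tmul', ← TensorProduct.sum_tmul, ← map_smul, ← map_sum]
    rw [← hxsum x.1 x.2, show p x.1 = 0 from hX x.1 x.2, TensorProduct.zero_tmul]
  obtain ⟨t, ht⟩ := T1compare (M := M) (P.complex.d 1 0).hom (P.complex.d 2 1).hom
    (by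
      have := P.exact_succ 0
      rw [ShortComplex.ShortExact.moduleCat_exact_iff_function_exact] at this
      exact this)
    (N := (X → A) ⧸ LinearMap.range D) (P.π.f 0).hom
    (by
      have := P.exact₀
      rw [ShortComplex.ShortExact.moduleCat_exact_iff_function_exact] at this
      exact this)
    ((ModuleCat.epi_iff_surjective (P.π.f 0)).mp inferInstance)
    D (LinearMap.range D).mkQ (LinearMap.exact_map_mkQ_range D) (Submodule.mkQ_surjective _)
    c hT z hz
  obtain ⟨s, rfl⟩ := LinearMap.rTensor_surjective _ hp t
  let t' : (ι →₀ A) ⊗[A] (E → A) := (LinearMap.ker D).subtype.lTensor _ s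
  have hev : ∀ i : E, p (evalc _ i t') = c • p (Finsupp.single i.1 1) := by
    intro i
    have h1 : ∀ y, p (evalc (ι →₀ A) i y) = evalc M i (p.rTensor _ y) := by
      intro y
      induction y using TensorProduct.induction_on with
      | zero => simp
      | add a b ha hb => simp only [map_add, ha, hb]
      | tmul a b => simp
    have h2 : p.rTensor _ t' = c • z := by
      rw [← ht]
      simp only [t']
      rw [← LinearMap.comp_apply, ← LinearMap.comp_apply, LinearMap.lTensor_comp_rTensor,
        LinearMap.rTensor_comp_lTensor]
    rw [h1, h2, map_smul]
    congr 1
    simp [z, Pi.single_apply, ite_smul]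
  have hrel : ∀ x ∈ X, ∑ i : E, x i.1 • evalc _ i t' = 0 := by
    intro x hx
    simp only [t']
    clear ht hev t'
    induction s using TensorProduct.induction_on with
    | zero => simp
    | add a b ha hb => simp only [map_add, smul_add, Finset.sum_add_distrib, ha, hb, add_zero]
    | tmul a b =>
      have h1 := hDa b ⟨x, hx⟩
      rw [show D b = 0 from b.2] at h1
      simp only [LinearMap.lTensor_tmul, Submodule.subtype_apply, evalc_tmul, smul_smul,
        ← Finset.sum_smul]
      rw [← h1]
      simp
  let φ : (ι →₀ A) →ₗ[A] (ι →₀ A) := Finsupp.linearCombination A fun i =>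
    if h : i ∈ E then c • Finsupp.single i 1 - evalc _ (⟨i, h⟩ : E) t' else 0
  have hφs : ∀ i : E, φ (Finsupp.single i.1 1) = c • Finsupp.single i.1 1 - evalc _ i t' := by
    intro i; simp [φ]
  refine ⟨φ, ?_, ?_⟩
  · intro y
    change Finsupp.linearCombination A _ y ∈ _
    rw [Finsupp.linearCombination_apply]
    refine Submodule.sum_mem _ (fun i _ => Submodule.smul_mem _ _ ?_)
    split_ifs with h
    · rw [LinearMap.mem_ker, map_sub, map_smul, hev ⟨i, h⟩, sub_self]
    · exact Submodule.zero_mem _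
  · intro x hx i
    have : φ x = c • x := by
      conv_lhs => rw [hxsum x hx, map_sum]
      simp only [map_smul, hφs, smul_sub, Finset.sum_sub_distrib, hrel x hx, sub_zero]
      conv_rhs => rw [hxsum x hx, Finset.smul_sum]
      refine Finset.sum_congr rfl (fun i _ => ?_)
      rw [smul_comm]
    simp [this]

lemma T2tor {R : Type u} [CommRing R] {M : Type u} [AddCommGroup M] [Module R M]
    {ι : Type u} (p : (ι →₀ R) →ₗ[R] M) (hp : Function.Surjective p) (c : R)
    (h : AF (LinearMap.ker p) ⊥ c) (N : ModuleCat.{u} R)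
    (x : ((Tor (ModuleCat.{u} R) 1).obj (ModuleCat.of R M)).obj N) : c • x = 0 := by
  revert x
  let P : ProjectiveResolution N := projectiveResolution N
  refine (tor_kill_iff (ModuleCat.of R M) N P c).mpr (fun z hz => ?_)
  refine T2mod (M := M) (P.complex.d 1 0).hom (P.complex.d 2 1).hom ?_ p hp c h z hz
  have := P.exact_succ 0
  rw [ShortComplex.ShortExact.moduleCat_exact_iff_function_exact] at this
  exact this

end TorAF

section Assembly

lemma fext_ker (R S : Type u) [CommRing R] [CommRing S] [Algebra R S] (M : Type u) [AddCommGroup M]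
    [Module R M] :
    LinearMap.ker (Finsupp.linearCombination S (fun m : M => (1 : S) ⊗ₜ[R] m))
      = fext (algebraMap R S) (LinearMap.ker (Finsupp.linearCombination R (id : M → M))) := by
  classical
  set K := LinearMap.ker (Finsupp.linearCombination R (id : M → M)) with hK
  have hs : ∀ (m : M) (r : R), fbc M (algebraMap R S) (Finsupp.single m r)
      = Finsupp.single m (algebraMap R S r) := by
    intro m r; simp [fbc]
  apply le_antisymm
  · let l : M →ₗ[R] ((M →₀ S) ⧸ fext (algebraMap R S) K) :=
      { toFun := fun m => Submodule.Quotient.mk (Finsupp.single m 1)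
        map_add' := by
          intro a b
          rw [← Submodule.Quotient.mk_add, Submodule.Quotient.eq]
          have : Finsupp.single (a + b) (1 : R) - (Finsupp.single a 1 + Finsupp.single b 1) ∈ K := by
            simp [hK]
          have := fbc_mem_fext (algebraMap R S) K this
          simpa [hs] using this
        map_smul' := by
          intro r a
          rw [RingHom.id_apply, ← Submodule.Quotient.mk_smul, Submodule.Quotient.eq]
          have : Finsupp.single (r • a) (1 : R) - Finsupp.single a r ∈ K := by
            simp [hK]
          have := fbc_mem_fext (algebraMap R S) K this
          simpa [hs, Algebra.algebraMap_eq_smul_one] using this }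
    intro x hx
    have h1 : (l.liftBaseChange S) ∘ₗ
        Finsupp.linearCombination S (fun m : M => (1 : S) ⊗ₜ[R] m)
        = (fext (algebraMap R S) K).mkQ := by
      ext m
      simp [l]
    have h2 := LinearMap.congr_fun h1 x
    rw [LinearMap.comp_apply, LinearMap.mem_ker.mp hx, map_zero] at h2
    exact (Submodule.Quotient.mk_eq_zero _).mp h2.symm
  · refine Submodule.span_le.mpr ?_
    rintro _ ⟨x, hx, rfl⟩
    have h1 : ∀ x : M →₀ R, Finsupp.linearCombination S (fun m : M => (1 : S) ⊗ₜ[R] m)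
        (fbc M (algebraMap R S) x) = (1 : S) ⊗ₜ[R] Finsupp.linearCombination R (id : M → M) x := by
      intro x
      induction x using Finsupp.induction_linear with
      | zero => simp
      | add x y hx hy => simp [hx, hy, TensorProduct.tmul_add]
      | single m r =>
        rw [hs]
        simp only [Finsupp.linearCombination_single, id, TensorProduct.tmul_smul, algebraMap_smul]
    change Finsupp.linearCombination S _ _ = 0
    rw [h1, show Finsupp.linearCombination R (id : M → M) x = 0 from hx, TensorProduct.tmul_zero]

end Assembly


/-- Let `m·m = m` with `m ⊗_V m` flat, and let `R → S` be a morphism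
of `V`-algebras which is a finite monomorphism of almost algebras: `m·ker = 0` and there
is a finitely generated `R`-submodule `Q ⊆ S` with `m·S ⊆ Q`.  If `M` is an `R`-module
such that `S ⊗_R M` is almost flat over `S`, then `M` is almost flat over `R`. -/
theorem almostFlat_descends_along_finite_monomorphism
    (V : Type v) [CommRing V] (m : Ideal V) (hm : m * m = m)
    (hflat : Module.Flat V (TensorProduct V m m))
    (R S : Type u) [CommRing R] [CommRing S] [Algebra V R] [Algebra V S]
    [Algebra R S] [IsScalarTower V R S]
    (hker : ∀ a ∈ m, ∀ x ∈ RingHom.ker (algebraMap R S), algebraMap V R a * x = 0)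
    (hfin : ∃ Q : Submodule R S, Q.FG ∧ ∀ s : S, ∀ a ∈ m, algebraMap V S a • s ∈ Q)
    (M : Type u) [AddCommGroup M] [Module R M]
    (hMS : IsAlmostFlat V m S (S ⊗[R] M)) :
    IsAlmostFlat V m R M := by
  obtain ⟨Q, hQfg, hQ⟩ := hfin
  obtain ⟨n, e, he⟩ := Submodule.fg_iff_exists_fin_generating_family.mp hQfg
  have halg : ∀ a, algebraMap R S (algebraMap V R a) = algebraMap V S a :=
    fun a => (IsScalarTower.algebraMap_apply V R S a).symm
  have hsurjS : Function.Surjective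
      (Finsupp.linearCombination S (fun x : M => (1 : S) ⊗ₜ[R] x)) := by
    intro t
    induction t using TensorProduct.induction_on with
    | zero => exact ⟨0, map_zero _⟩
    | add x y hx hy =>
      obtain ⟨a, rfl⟩ := hx
      obtain ⟨b, rfl⟩ := hy
      exact ⟨a + b, map_add _ _ _⟩
    | tmul s x =>
      refine ⟨Finsupp.single x s, ?_⟩
      simp [TensorProduct.smul_tmul']
  have hsurjR : Function.Surjective (Finsupp.linearCombination R (id : M → M)) :=
    Finsupp.linearCombination_id_surjective R M
  intro N a ha x
  refine T2tor _ hsurjR _ ?_ N x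
  refine AF_descends m hm hflat R S (algebraMap R S) (fun a ha x hx => hker a ha x hx) e ?_ ?_ a ha
  · intro a ha s
    have h1 := hQ s a ha
    rw [← he] at h1
    obtain ⟨r, hr⟩ := (Submodule.mem_span_range_iff_exists_fun R).mp h1
    refine ⟨r, ?_⟩
    rw [halg, ← smul_eq_mul, ← hr]
    simp only [Algebra.smul_def]
  · intro a ha
    rw [← fext_ker, halg]
    exact T1mod _ hsurjS _ (fun N x => hMS N a ha x)
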